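/- arXiv:2109.13721 — 3 statements merged into one kernel-verified Lean document; each statement's English description precedes it below -/
import Mathlib

section
/- Let (M,d) be a compact metric space and let f, g : M → ℝ be two continuous functions (with respect to the metric topology) such that |∇f|(x) and |∇g|(x) are finite for every x ∈ M. Assume (i) |∇f|(x) = |∇g|(x) for all x ∈ M, and (ii) there exists c ∈ ℝ such that g(x) − f(x) = c for all x ∈ Crit(f). Then g = f + c on all of M. -/
open Filter Topology
open scoped ENNReal Classical

/-- The metric slope of `f : M → ℝ` at `x`: it is `0` if `x` is an isolated point of `M`,
and otherwise `limsup_{y → x, y ≠ x} (f x - f y)⁺ / d(x,y)`, with values in `[0, +∞]`. -/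
noncomputable def metricSlope {M : Type*} [MetricSpace M] (f : M → ℝ) (x : M) : ℝ≥0∞ :=
  if 𝓝[≠] x = ⊥ then 0
  else Filter.limsup (fun y => ENNReal.ofReal (max (f x - f y) 0 / dist x y)) (𝓝[≠] x)

theorem slope_scaled_le {M : Type*} [MetricSpace M] (f g : M → ℝ) (a : ℝ) (ha : 0 ≤ a) (x : M)
    (hx : ∀ y, a * g x - f x ≤ a * g y - f y) :
    ENNReal.ofReal a * metricSlope g x ≤ metricSlope f x := by
  unfold metricSlope
  split_ifs with h0
  · simp
  · rw [← ENNReal.limsup_const_mul_of_ne_top ENNReal.ofReal_ne_top]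
    refine Filter.limsup_le_limsup (Filter.Eventually.of_forall fun y => ?_)
    simp only
    rw [← ENNReal.ofReal_mul ha]
    apply ENNReal.ofReal_le_ofReal
    rw [← mul_div_assoc, mul_max_of_nonneg _ _ ha, mul_zero]
    have := hx y
    gcongr
    linarith

theorem determination_half {M : Type*} [MetricSpace M] [CompactSpace M]
    (f g : M → ℝ) (hf_cont : Continuous f) (hg_cont : Continuous g)
    (hf_fin : ∀ x : M, metricSlope f x ≠ ⊤)
    (h : ∀ x : M, metricSlope f x = metricSlope g x)
    (c : ℝ) (hc : ∀ x : M, metricSlope f x = 0 → g x - f x = c) (y : M) :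
    c ≤ g y - f y := by
  obtain ⟨z, -, hz⟩ := isCompact_univ.exists_isMaxOn (⟨y, trivial⟩ : (Set.univ : Set M).Nonempty)
    (hg_cont.abs.continuousOn)
  have hB : ∀ w, |g w| ≤ |g z| := fun w => hz (Set.mem_univ w)
  generalize |g z| = B at hB
  have hB0 : 0 ≤ B := (abs_nonneg _).trans (hB y)
  refine le_of_forall_pos_le_add fun δ hδ => ?_
  obtain ⟨ε, hε, hεδ⟩ : ∃ ε : ℝ, 0 < ε ∧ ε * (2 * B + 1) = δ :=
    ⟨δ / (2 * B + 1), by positivity, by field_simp⟩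
  have hcont : Continuous fun w => (1 + ε) * g w - f w := by fun_prop
  obtain ⟨x, -, hx⟩ := isCompact_univ.exists_isMinOn (⟨y, trivial⟩ : (Set.univ : Set M).Nonempty)
    hcont.continuousOn
  have hx' : ∀ w, (1 + ε) * g x - f x ≤ (1 + ε) * g w - f w := fun w => hx (Set.mem_univ w)
  have key := slope_scaled_le f g (1 + ε) (by positivity) x hx'
  rw [← h x] at key
  have h0 : metricSlope f x = 0 := by
    by_contra hne
    have h1 : (1 : ℝ≥0∞) < ENNReal.ofReal (1 + ε) := by
      rw [← ENNReal.ofReal_one]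
      exact (ENNReal.ofReal_lt_ofReal_iff (by positivity)).2 (by linarith)
    have h2 := ENNReal.mul_lt_mul_left hne (hf_fin x) h1
    rw [one_mul] at h2
    exact absurd key (not_le.2 h2)
  have h3 := hc x h0
  have h4 := hx' y
  have h5 := (abs_le.1 (hB x)).1
  have h6 := (abs_le.1 (hB y)).2
  nlinarith [mul_le_mul_of_nonneg_left h5 hε.le, mul_le_mul_of_nonneg_left h6 hε.le]

/-- Determination theorem on a compact metric space: two continuous functions with equal,
everywhere finite slopes that differ by `c` on `Crit f` satisfy `g = f + c`. -/
theorem determination_compact {M : Type*} [MetricSpace M] [CompactSpace M]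
    (f g : M → ℝ) (hf_cont : Continuous f) (hg_cont : Continuous g)
    (hf_fin : ∀ x : M, metricSlope f x ≠ ⊤) (hg_fin : ∀ x : M, metricSlope g x ≠ ⊤)
    (h : ∀ x : M, metricSlope f x = metricSlope g x)
    (c : ℝ) (hc : ∀ x : M, metricSlope f x = 0 → g x - f x = c) :
    ∀ x : M, g x = f x + c := by
  intro x
  have h1 := determination_half f g hf_cont hg_cont hf_fin h c hc x
  have h2 := determination_half g f hg_cont hf_cont hg_fin (fun x => (h x).symm) (-c)
    (fun x hx => by linarith [hc x ((h x).trans hx)]) x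
  linarith
end

section
/- Let X be a reflexive Banach space and let f, g : X → ℝ be two functions that are continuous with respect to the weak topology of X and whose sublevel sets [f ≤ α] (for α < sup f) and [g ≤ α] (for α < sup g) are weakly compact. Assume (i) |∇f|(x) < +∞ for every x ∈ X, (ii) |∇f|(x) = |∇g|(x) for all x ∈ X, and (iii) there exists c ∈ ℝ such that g(x) − f(x) = c for all x ∈ Crit(f). Then g = f + c on all of X. -/
open Filter Topology
open scoped ENNReal Classical

/-- At a noncritical point with equal finite slopes there is a point where `g` is smaller and
`f - (1+ε) g` is larger. -/
lemma slope_step {M : Type*} [MetricSpace M] (f g : M → ℝ) (x : M)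
    (h1 : metricSlope f x ≠ ⊤) (h2 : metricSlope f x = metricSlope g x)
    (h0 : metricSlope f x ≠ 0) (ε : ℝ) (hε : 0 < ε) :
    ∃ y, g y < g x ∧ f x - (1 + ε) * g x < f y - (1 + ε) * g y := by
  obtain ⟨t, ht⟩ : ∃ t : ℝ, t = (metricSlope f x).toReal := ⟨_, rfl⟩
  have htpos : 0 < t := by rw [ht]; exact ENNReal.toReal_pos h0 h1
  have hft : metricSlope f x = ENNReal.ofReal t := by rw [ht, ENNReal.ofReal_toReal h1]
  have hgt : metricSlope g x = ENNReal.ofReal t := by rw [← h2, hft]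
  have hb : ¬ (𝓝[≠] x = ⊥) := by
    intro hb
    apply h0
    simp [metricSlope, hb]
  simp only [metricSlope, if_neg hb] at hft hgt
  set r : ℝ := t * (1 + ε / 2) with hr
  have hr1 : t < r := by rw [hr]; nlinarith
  have hrpos : 0 < r := htpos.trans hr1
  have hr2 : r / (1 + ε) < t := by
    rw [div_lt_iff₀ (by linarith), hr]; nlinarith
  have hF : ∀ᶠ y in 𝓝[≠] x,
      ENNReal.ofReal (max (f x - f y) 0 / dist x y) < ENNReal.ofReal r := by
    refine Filter.eventually_lt_of_limsup_lt ?_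
    rw [hft]
    exact (ENNReal.ofReal_lt_ofReal_iff hrpos).2 hr1
  have hG : ∃ᶠ y in 𝓝[≠] x,
      ENNReal.ofReal (r / (1 + ε)) < ENNReal.ofReal (max (g x - g y) 0 / dist x y) := by
    refine Filter.frequently_lt_of_lt_limsup (by isBoundedDefault) ?_
    rw [hgt]
    exact (ENNReal.ofReal_lt_ofReal_iff htpos).2 hr2
  obtain ⟨y, hgy, hfy, hne⟩ := (hG.and_eventually (hF.and self_mem_nhdsWithin)).exists
  have hd : 0 < dist x y := dist_pos.2 (Ne.symm hne)
  have hfy' := (ENNReal.ofReal_lt_ofReal_iff hrpos).1 hfy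
  have hq : 0 < r / (1 + ε) := by positivity
  have hgy' := ENNReal.ofReal_lt_ofReal_iff_of_nonneg hq.le |>.1 hgy
  rw [div_lt_iff₀ hd] at hfy'
  rw [lt_div_iff₀ hd] at hgy'
  have hA : f x - f y < r * dist x y := lt_of_le_of_lt (le_max_left _ _) hfy'
  have hpos : 0 < r / (1 + ε) * dist x y := by positivity
  have hB : r / (1 + ε) * dist x y < g x - g y := by
    rcases lt_max_iff.1 hgy' with h | h
    · exact h
    · linarith
  refine ⟨y, by linarith, ?_⟩
  have hC : r * dist x y < (1 + ε) * (g x - g y) := by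
    have := mul_lt_mul_of_pos_left hB (show 0 < 1 + ε by linarith)
    have e : (1 + ε) * (r / (1 + ε) * dist x y) = r * dist x y := by
      field_simp
    linarith
  linarith

/-- One-sided comparison; `W` carries the auxiliary (weak) topology. -/
lemma slope_compare {M W : Type*} [MetricSpace M] [TopologicalSpace W] (e : W → M)
    (he : Function.Surjective e) (f g : M → ℝ)
    (hf : Continuous (fun w => f (e w))) (hg : Continuous (fun w => g (e w)))
    (hgc : ∀ α : ℝ, (∃ y, α < g y) → IsCompact {w : W | g (e w) ≤ α})
    (h1 : ∀ x, metricSlope f x ≠ ⊤) (h2 : ∀ x, metricSlope f x = metricSlope g x)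
    (k : ℝ) (hk : ∀ x, metricSlope f x = 0 → f x - g x ≤ k) (x : M) : f x - g x ≤ k := by
  by_contra! hx
  have hx0 : metricSlope f x ≠ 0 := fun h => absurd (hk x h) (not_le.2 hx)
  -- a lower bound of `g`
  obtain ⟨m, hm⟩ : ∃ m, ∀ y, m ≤ g y := by
    obtain ⟨y, hy, -⟩ := slope_step f g x (h1 x) (h2 x) hx0 1 one_pos
    obtain ⟨v, rfl⟩ := he y
    obtain ⟨w, hw, hmin⟩ := (hgc (g (e v)) ⟨x, hy⟩).exists_isMinOn ⟨v, le_refl (g (e v))⟩ hg.continuousOn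
    refine ⟨g (e w), fun z => ?_⟩
    obtain ⟨u, rfl⟩ := he z
    by_cases hu : g (e u) ≤ g (e v)
    · exact hmin hu
    · exact le_trans hw (not_le.1 hu).le
  obtain ⟨ε, hε, hεx⟩ : ∃ ε : ℝ, 0 < ε ∧ ε * (g x - m) < f x - g x - k := by
    have hp : 0 < g x - m + 1 := by linarith [hm x]
    refine ⟨(f x - g x - k) / (g x - m + 1), div_pos (by linarith) hp, ?_⟩
    rw [div_mul_eq_mul_div, div_lt_iff₀ hp]
    nlinarith [hm x]
  obtain ⟨y, hy, hyx⟩ := slope_step f g x (h1 x) (h2 x) hx0 ε hε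
  obtain ⟨v, rfl⟩ := he y
  have hcont : Continuous (fun w => f (e w) - (1 + ε) * g (e w)) := hf.sub (continuous_const.mul hg)
  obtain ⟨w, hw, hmax⟩ := (hgc (g (e v)) ⟨x, hy⟩).exists_isMaxOn ⟨v, le_refl (g (e v))⟩ hcont.continuousOn
  have hvw : f (e v) - (1 + ε) * g (e v) ≤ f (e w) - (1 + ε) * g (e w) :=
    hmax (show g (e v) ≤ g (e v) from le_refl _)
  have hw0 : metricSlope f (e w) ≠ 0 := by
    intro h
    have h3 := hk _ h
    have h4 : 0 ≤ ε * (g (e w) - m) := mul_nonneg hε.le (by linarith [hm (e w)])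
    nlinarith
  obtain ⟨z, hz, hzw⟩ := slope_step f g (e w) (h1 _) (h2 _) hw0 ε hε
  obtain ⟨u, rfl⟩ := he z
  have : f (e u) - (1 + ε) * g (e u) ≤ f (e w) - (1 + ε) * g (e w) :=
    hmax (show g (e u) ≤ g (e v) from hz.le.trans hw)
  linarith

/-- Determination theorem in a reflexive Banach space (reflexivity: the canonical inclusion
into the double dual is surjective), for weakly continuous functions with weakly compact
sublevel sets `[f ≤ α]` for `α < sup f` (expressed as `∃ y, α < f y`). -/
theorem determination_reflexive_banach {X : Type*}
    [NormedAddCommGroup X] [NormedSpace ℝ X] [CompleteSpace X]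
    (hrefl : Function.Surjective (NormedSpace.inclusionInDoubleDual ℝ X))
    (f g : X → ℝ)
    (hf_cont : Continuous (fun x : WeakSpace ℝ X => f x))
    (hg_cont : Continuous (fun x : WeakSpace ℝ X => g x))
    (hf_coer : ∀ α : ℝ, (∃ y : X, α < f y) → IsCompact {x : WeakSpace ℝ X | f x ≤ α})
    (hg_coer : ∀ α : ℝ, (∃ y : X, α < g y) → IsCompact {x : WeakSpace ℝ X | g x ≤ α})
    (h1 : ∀ x : X, metricSlope f x ≠ ⊤)
    (h2 : ∀ x : X, metricSlope f x = metricSlope g x)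
    (c : ℝ) (hc : ∀ x : X, metricSlope f x = 0 → g x - f x = c) :
    ∀ x : X, g x = f x + c := by
  intro x
  have A := slope_compare (M := X) (W := WeakSpace ℝ X) (fun w : WeakSpace ℝ X => (w : X))
    (fun y => ⟨y, rfl⟩) f g hf_cont hg_cont hg_coer h1 h2 (-c)
    (fun x h => by linarith [hc x h]) x
  have B := slope_compare (M := X) (W := WeakSpace ℝ X) (fun w : WeakSpace ℝ X => (w : X))
    (fun y => ⟨y, rfl⟩) g f hg_cont hf_cont hf_coer (fun x => h2 x ▸ h1 x) (fun x => (h2 x).symm) c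
    (fun x h => (hc x ((h2 x).trans h)).le) x
  linarith
end

section
/- Let f : ℝ → ℝ be defined by f(x) = (x + π/2)² − 1 for x < −π/2, f(x) = sin(x) for −π/2 ≤ x ≤ π/2, and f(x) = (x − π/2)² + 1 for x > π/2, and let g(x) = f(−x). Then f and g are continuously differentiable, their sublevel sets [f ≤ α] and [g ≤ α] are compact for every α ∈ ℝ, |∇f|(x) = |∇g|(x) < +∞ for every x ∈ ℝ, and yet there is no constant c ∈ ℝ such that f(x) = g(x) + c for all x ∈ ℝ. -/
open Filter Topology
open scoped ENNReal Classical

/-- The piecewise function of the square-and-sinus example. -/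
noncomputable def sqSin (x : ℝ) : ℝ :=
  if x < -(Real.pi / 2) then (x + Real.pi / 2) ^ 2 - 1
  else if x ≤ Real.pi / 2 then Real.sin x
  else (x - Real.pi / 2) ^ 2 + 1

/-- The derivative of `sqSin`. -/
noncomputable def sqSinD (x : ℝ) : ℝ :=
  2 * min (x + Real.pi / 2) 0 + Real.cos (max (-(Real.pi / 2)) (min x (Real.pi / 2)))
    + 2 * max (x - Real.pi / 2) 0

lemma sqSin_left {x : ℝ} (hx : x ≤ -(Real.pi / 2)) : sqSin x = (x + Real.pi / 2) ^ 2 - 1 := by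
  have hp := Real.pi_pos
  rcases hx.lt_or_eq with h | h
  · simp [sqSin, h]
  · subst h
    have : -(Real.pi / 2) ≤ Real.pi / 2 := by linarith
    simp [sqSin, this]

lemma sqSin_mid {x : ℝ} (hx : -(Real.pi / 2) ≤ x) (hx' : x ≤ Real.pi / 2) :
    sqSin x = Real.sin x := by
  simp [sqSin, hx', not_lt.2 hx]

lemma sqSin_right {x : ℝ} (hx : Real.pi / 2 ≤ x) : sqSin x = (x - Real.pi / 2) ^ 2 + 1 := by
  have hp := Real.pi_pos
  have h1 : ¬ x < -(Real.pi / 2) := by linarith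
  rcases hx.lt_or_eq with h | h
  · simp [sqSin, h1, not_le.2 h]
  · subst h
    rw [sqSin_mid (by linarith) le_rfl]; simp

lemma sqSinD_left {x : ℝ} (hx : x ≤ -(Real.pi / 2)) : sqSinD x = 2 * (x + Real.pi / 2) := by
  have hp := Real.pi_pos
  rw [sqSinD, min_eq_left (by linarith), min_eq_left (by linarith), max_eq_left hx,
    max_eq_right (by linarith)]
  simp

lemma sqSinD_mid {x : ℝ} (hx : -(Real.pi / 2) ≤ x) (hx' : x ≤ Real.pi / 2) :
    sqSinD x = Real.cos x := by
  rw [sqSinD, min_eq_right (by linarith), min_eq_left (by linarith), max_eq_right hx,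
    max_eq_right (by linarith)]
  simp

lemma sqSinD_right {x : ℝ} (hx : Real.pi / 2 ≤ x) : sqSinD x = 2 * (x - Real.pi / 2) := by
  have hp := Real.pi_pos
  rw [sqSinD, min_eq_right (by linarith), min_eq_right (by linarith), max_eq_right (by linarith),
    max_eq_left (by linarith)]
  simp

lemma sqSinD_abs (x : ℝ) : |sqSinD (-x)| = |sqSinD x| := by
  rcases le_total x (-(Real.pi / 2)) with h | h
  · rw [sqSinD_left h, sqSinD_right (by linarith), ← abs_neg]; congr 1; ring
  · rcases le_total x (Real.pi / 2) with h' | h'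
    · rw [sqSinD_mid h h', sqSinD_mid (by linarith) (by linarith), Real.cos_neg]
    · rw [sqSinD_right h', sqSinD_left (by linarith), ← abs_neg]; congr 1; ring

lemma sqSinD_continuous : Continuous sqSinD := by
  unfold sqSinD; fun_prop

lemma sqSin_hasDerivAt (x : ℝ) : HasDerivAt sqSin (sqSinD x) x := by
  have hp := Real.pi_pos
  have hL : ∀ y : ℝ, HasDerivAt (fun x : ℝ => (x + Real.pi / 2) ^ 2 - 1)
      (2 * (y + Real.pi / 2)) y := fun y => by
    simpa using (((hasDerivAt_id y).add_const (Real.pi / 2)).pow 2).sub_const 1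
  have hR : ∀ y : ℝ, HasDerivAt (fun x : ℝ => (x - Real.pi / 2) ^ 2 + 1)
      (2 * (y - Real.pi / 2)) y := fun y => by
    simpa using (((hasDerivAt_id y).sub_const (Real.pi / 2)).pow 2).add_const 1
  have left : ∀ y : ℝ, y ≤ -(Real.pi / 2) →
      HasDerivWithinAt sqSin (sqSinD y) (Set.Iic y) y := fun y hy => by
    rw [sqSinD_left hy]
    exact (hL y).hasDerivWithinAt.congr (fun z hz => sqSin_left (le_trans hz hy)) (sqSin_left hy)
  have right : ∀ y : ℝ, Real.pi / 2 ≤ y →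
      HasDerivWithinAt sqSin (sqSinD y) (Set.Ici y) y := fun y hy => by
    rw [sqSinD_right hy]
    exact (hR y).hasDerivWithinAt.congr (fun z hz => sqSin_right (le_trans hy hz)) (sqSin_right hy)
  have mid : ∀ y ∈ Set.Icc (-(Real.pi / 2)) (Real.pi / 2),
      HasDerivWithinAt sqSin (sqSinD y) (Set.Icc (-(Real.pi / 2)) (Real.pi / 2)) y :=
    fun y hy => by
    rw [sqSinD_mid hy.1 hy.2]
    exact (Real.hasDerivAt_sin y).hasDerivWithinAt.congr (fun z hz => sqSin_mid hz.1 hz.2)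
      (sqSin_mid hy.1 hy.2)
  rcases lt_trichotomy x (-(Real.pi / 2)) with h | h | h
  · rw [sqSinD_left h.le]
    refine (hL x).congr_of_eventuallyEq ?_
    filter_upwards [Iio_mem_nhds h] with z hz using sqSin_left (le_of_lt hz)
  · refine ((left x h.le).union (mid x ⟨h.ge, by linarith⟩)).hasDerivAt ?_
    filter_upwards [Iio_mem_nhds (show x < Real.pi / 2 by linarith)] with z hz
    rcases le_total z x with h1 | h1
    · exact Or.inl h1
    · exact Or.inr ⟨h ▸ h1, le_of_lt hz⟩
  · rcases lt_trichotomy x (Real.pi / 2) with h' | h' | h'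
    · exact (mid x ⟨h.le, h'.le⟩).hasDerivAt (Icc_mem_nhds h h')
    · refine ((mid x ⟨h.le, h'.le⟩).union (right x h'.ge)).hasDerivAt ?_
      filter_upwards [Ioi_mem_nhds h] with z hz
      rcases le_total z x with h1 | h1
      · exact Or.inl ⟨le_of_lt hz, by linarith⟩
      · exact Or.inr h1
    · rw [sqSinD_right h'.le]
      refine (hR x).congr_of_eventuallyEq ?_
      filter_upwards [Ioi_mem_nhds h'] with z hz using sqSin_right (le_of_lt hz)

lemma sqSin_contDiff : ContDiff ℝ 1 sqSin := by
  rw [contDiff_one_iff_deriv]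
  refine ⟨fun x => (sqSin_hasDerivAt x).differentiableAt, ?_⟩
  rw [show deriv sqSin = sqSinD from funext fun x => (sqSin_hasDerivAt x).deriv]
  exact sqSinD_continuous

lemma sqSin_lower (x : ℝ) : |x| - Real.pi / 2 - 2 ≤ sqSin x := by
  have hp := Real.pi_pos
  rcases le_total x (-(Real.pi / 2)) with h | h
  · rw [sqSin_left h, abs_of_nonpos (by linarith)]
    nlinarith [sq_nonneg (x + Real.pi / 2 + 1 / 2)]
  · rcases le_total x (Real.pi / 2) with h' | h'
    · rw [sqSin_mid h h']
      have := Real.neg_one_le_sin x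
      have := abs_le.2 ⟨h, h'⟩
      linarith
    · rw [sqSin_right h', abs_of_nonneg (by linarith)]
      nlinarith [sq_nonneg (x - Real.pi / 2 - 1 / 2)]

lemma metricSlope_of_hasDerivAt {f : ℝ → ℝ} {d x : ℝ} (h : HasDerivAt f d x) :
    metricSlope f x = ENNReal.ofReal |d| := by
  have hne : 𝓝[≠] x ≠ ⊥ := NeBot.ne inferInstance
  rw [metricSlope, if_neg hne]
  have hs := hasDerivAt_iff_tendsto_slope.1 h
  apply le_antisymm
  · have ht : Tendsto (fun y => ENNReal.ofReal |slope f x y|) (𝓝[≠] x)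
        (𝓝 (ENNReal.ofReal |d|)) := ENNReal.tendsto_ofReal hs.abs
    rw [← ht.limsup_eq]
    refine limsup_le_limsup (Eventually.of_forall fun y => ?_)
    refine ENNReal.ofReal_le_ofReal ?_
    rw [slope_def_field, abs_div, Real.dist_eq, abs_sub_comm x y, abs_sub_comm (f y)]
    gcongr
    exact max_le (le_abs_self _) (abs_nonneg _)
  · rcases le_total 0 d with hd | hd
    · have hle : 𝓝[<] x ≤ 𝓝[≠] x := nhdsWithin_mono _ fun y hy => ne_of_lt hy
      have ht : Tendsto (fun y => ENNReal.ofReal (slope f x y)) (𝓝[<] x)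
          (𝓝 (ENNReal.ofReal |d|)) := by
        rw [abs_of_nonneg hd]
        exact ENNReal.tendsto_ofReal (hs.mono_left hle)
      rw [← ht.limsup_eq]
      refine le_trans (limsup_le_limsup ?_) (limsup_le_limsup_of_le hle)
      filter_upwards [self_mem_nhdsWithin] with y hy
      have hy : y < x := hy
      refine ENNReal.ofReal_le_ofReal ?_
      rw [slope_comm, slope_def_field, Real.dist_eq, abs_of_pos (sub_pos.2 hy)]
      exact div_le_div_of_nonneg_right (le_max_left _ _) (sub_pos.2 hy).le
    · have hle : 𝓝[>] x ≤ 𝓝[≠] x := nhdsWithin_mono _ fun y hy => ne_of_gt hy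
      have ht : Tendsto (fun y => ENNReal.ofReal (-slope f x y)) (𝓝[>] x)
          (𝓝 (ENNReal.ofReal |d|)) := by
        rw [abs_of_nonpos hd]
        exact ENNReal.tendsto_ofReal (hs.mono_left hle).neg
      rw [← ht.limsup_eq]
      refine le_trans (limsup_le_limsup ?_) (limsup_le_limsup_of_le hle)
      filter_upwards [self_mem_nhdsWithin] with y hy
      have hy : x < y := hy
      refine ENNReal.ofReal_le_ofReal ?_
      rw [slope_def_field, Real.dist_eq, abs_sub_comm, abs_of_pos (sub_pos.2 hy), ← neg_div,
        neg_sub]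
      exact div_le_div_of_nonneg_right (le_max_left _ _) (sub_pos.2 hy).le

/-- `f = sqSin` and `g(x) = f(-x)` are `C¹`, have compact sublevel sets and equal finite
slopes everywhere, yet they do not differ by a constant. -/
theorem sqSin_counterexample :
    ContDiff ℝ 1 sqSin ∧ ContDiff ℝ 1 (fun x : ℝ => sqSin (-x)) ∧
    (∀ α : ℝ, IsCompact {x : ℝ | sqSin x ≤ α}) ∧
    (∀ α : ℝ, IsCompact {x : ℝ | sqSin (-x) ≤ α}) ∧
    (∀ x : ℝ, metricSlope sqSin x = metricSlope (fun y : ℝ => sqSin (-y)) x) ∧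
    (∀ x : ℝ, metricSlope sqSin x ≠ ⊤) ∧
    ¬∃ c : ℝ, ∀ x : ℝ, sqSin x = sqSin (-x) + c := by
  have hc := sqSin_contDiff.continuous
  refine ⟨sqSin_contDiff, sqSin_contDiff.comp contDiff_neg, fun α => ?_, fun α => ?_,
    fun x => ?_, fun x => ?_, ?_⟩
  · refine (isCompact_Icc (a := -(α + Real.pi / 2 + 2)) (b := α + Real.pi / 2 + 2)).of_isClosed_subset
      (isClosed_le hc continuous_const) fun x hx => ?_
    have hx : sqSin x ≤ α := hx
    have := sqSin_lower x
    exact abs_le.1 (by linarith)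
  · refine (isCompact_Icc (a := -(α + Real.pi / 2 + 2)) (b := α + Real.pi / 2 + 2)).of_isClosed_subset
      (isClosed_le (hc.comp continuous_neg) continuous_const) fun x hx => ?_
    have hx : sqSin (-x) ≤ α := hx
    have := sqSin_lower (-x)
    rw [abs_neg] at this
    exact abs_le.1 (by linarith)
  · have hg : HasDerivAt (fun y : ℝ => sqSin (-y)) (sqSinD (-x) * (-1)) x :=
      (sqSin_hasDerivAt (-x)).comp x (hasDerivAt_neg x)
    rw [metricSlope_of_hasDerivAt (sqSin_hasDerivAt x), metricSlope_of_hasDerivAt hg,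
      mul_neg_one, abs_neg, sqSinD_abs]
  · rw [metricSlope_of_hasDerivAt (sqSin_hasDerivAt x)]
    exact ENNReal.ofReal_ne_top
  · rintro ⟨c, h⟩
    have hp := Real.pi_pos
    have h0 := h 0
    have h1 := h (Real.pi / 2)
    rw [neg_zero] at h0
    rw [sqSin_right le_rfl, sqSin_left le_rfl] at h1
    norm_num at h1
    linarith
end
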